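/- For every integer n ≥ 3 and every real d > 0, the iterated integral ∫_{x=-∞}^{0} ∫_{y=d}^{∞} log(y−d) / (y−x)^n dy dx equals (log(d) − H(n−3)) / ((n−1)(n−2)·d^{n−2}). -/

import Mathlib

open Real MeasureTheory

/-- The `m`-th harmonic number `H(m) = ∑_{i=1}^{m} 1/i`, with `H(0) = 0`. -/
noncomputable def H (m : ℕ) : ℝ := ∑ i ∈ Finset.range m, (1 : ℝ) / (i + 1)

/-- Rational part of the antiderivative. -/
noncomputable def auxT (a : ℝ) : ℕ → ℝ → ℝ
  | 0 => fun _ => 0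
  | (p + 1) => fun t => (auxT a p t + 1 / ((p + 1 : ℝ) * (t + a) ^ (p + 1))) / a

open Filter Topology Set

lemma H_succ' (p : ℕ) : H (p + 1) = H p + 1 / ((p : ℝ) + 1) := by
  simp [H, Finset.sum_range_succ]

lemma auxT_zero (a : ℝ) (ha : 0 < a) (p : ℕ) : auxT a p 0 = H p / a ^ (p + 1) := by
  induction p with
  | zero => simp [auxT, H]
  | succ p ih =>
    simp only [auxT, ih, H_succ', zero_add]
    have : (p : ℝ) + 1 ≠ 0 := by positivity
    field_simp
    ring

lemma hasDerivAt_pow_inv' (a t : ℝ) (h : 0 < t + a) (p : ℕ) :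
    HasDerivAt (fun t => 1 / (t + a) ^ (p + 1)) (-((p : ℝ) + 1) / (t + a) ^ (p + 2)) t := by
  have h1 : HasDerivAt (fun t => (t + a) ^ (p + 1)) (((p + 1 : ℕ) : ℝ) * (t + a) ^ p * 1) t := by
    exact ((hasDerivAt_id t).add_const a).pow (p + 1)
  have h2 := h1.inv (by positivity)
  simp only [one_div]
  refine h2.congr_deriv ?_
  push_cast
  field_simp
  ring

lemma auxT_deriv (a t : ℝ) (ha : 0 < a) (ht : 0 < t + a) (p : ℕ) :
    ∃ D, HasDerivAt (auxT a p) D t ∧ t * D = 1 / (t + a) ^ (p + 1) - 1 / ((t + a) * a ^ p) := by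
  induction p with
  | zero => exact ⟨0, hasDerivAt_const _ _, by simp⟩
  | succ p ih =>
    obtain ⟨D, hD, hD2⟩ := ih
    refine ⟨(D - 1 / (t + a) ^ (p + 2)) / a, ?_, ?_⟩
    · have h := hasDerivAt_pow_inv' a t ht p
      have h2 := (hD.add (h.const_mul (1 / ((p : ℝ) + 1)))).div_const a
      have hp : (p : ℝ) + 1 ≠ 0 := by positivity
      refine (h2.congr_deriv ?_).congr_of_eventuallyEq ?_
      · field_simp
        try ring
      · refine Filter.Eventually.of_forall fun s => ?_
        simp [auxT, mul_comm]
    · have : t * ((D - 1 / (t + a) ^ (p + 2)) / a) = (t * D - t / (t + a) ^ (p + 2)) / a := by ring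
      rw [this, hD2]
      field_simp
      ring

lemma tendsto_pow_inv' (a : ℝ) (p : ℕ) :
    Tendsto (fun t : ℝ => 1 / (t + a) ^ (p + 1)) atTop (𝓝 0) := by
  simp only [one_div]
  exact ((tendsto_pow_atTop (by omega)).comp (tendsto_atTop_add_const_right _ a tendsto_id)).inv_tendsto_atTop

lemma auxT_tendsto (a : ℝ) (p : ℕ) : Tendsto (auxT a p) atTop (𝓝 0) := by
  induction p with
  | zero => exact tendsto_const_nhds
  | succ p ih =>
    have h := (ih.add ((tendsto_pow_inv' a p).const_mul (1 / ((p : ℝ) + 1)))).div_const a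
    simp only [mul_zero, add_zero, zero_div] at h
    refine h.congr fun s => ?_
    simp [auxT, mul_comm]

lemma log_div_pow_tendsto (a : ℝ) (ha : 0 ≤ a) (p : ℕ) :
    Tendsto (fun t : ℝ => log t / (t + a) ^ (p + 1)) atTop (𝓝 0) := by
  have h0 : Tendsto (fun t : ℝ => log t / t) atTop (𝓝 0) :=
    isLittleO_log_id_atTop.tendsto_div_nhds_zero
  refine squeeze_zero' ?_ ?_ h0
  · filter_upwards [eventually_ge_atTop 1] with t ht
    have := log_nonneg ht
    positivity
  · filter_upwards [eventually_ge_atTop 1] with t ht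
    have := log_nonneg ht
    gcongr
    calc t ≤ t + a := by linarith
      _ ≤ (t + a) ^ (p + 1) := le_self_pow₀ (by linarith) (by omega)

/-- The antiderivative of the inner integrand. -/
noncomputable def auxF (a : ℝ) (r : ℕ) (t : ℝ) : ℝ :=
  ((1 / a ^ (r + 1) - 1 / (t + a) ^ (r + 1)) * log t - log (t + a) / a ^ (r + 1) + auxT a r t)
    / (r + 1)

lemma auxF_deriv (a t : ℝ) (ha : 0 < a) (ht : 0 < t) (r : ℕ) :
    HasDerivAt (auxF a r) (log t / (t + a) ^ (r + 2)) t := by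
  have hta : 0 < t + a := by linarith
  obtain ⟨D, hD, hD2⟩ := auxT_deriv a t ha hta r
  have h1 := (hasDerivAt_pow_inv' a t hta r).const_sub (1 / a ^ (r + 1))
  have h2 := h1.mul (hasDerivAt_log ht.ne')
  have h3 : HasDerivAt (fun t => log (t + a)) (1 / (t + a)) t :=
    ((hasDerivAt_id t).add_const a).log hta.ne'
  have h4 := ((h2.sub (h3.div_const (a ^ (r + 1)))).add hD).div_const ((r : ℝ) + 1)
  have hr : (r : ℝ) + 1 ≠ 0 := by positivity
  have hD3 : D = (1 / (t + a) ^ (r + 1) - 1 / ((t + a) * a ^ r)) / t := by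
    rw [← hD2]; field_simp
  refine h4.congr_deriv ?_
  rw [hD3]
  field_simp
  ring

lemma auxF_tendsto (a : ℝ) (ha : 0 < a) (r : ℕ) : Tendsto (auxF a r) atTop (𝓝 0) := by
  have h1 := ((tendsto_log_comp_add_sub_log a).div_const (a ^ (r + 1))).neg
  have h2 := (((h1.sub (log_div_pow_tendsto a ha.le r)).add (auxT_tendsto a r)).div_const
    ((r : ℝ) + 1))
  simp only [zero_div, neg_zero, sub_zero, add_zero] at h2
  refine h2.congr fun t => ?_
  simp only [auxF]
  ring

lemma auxF_cont (a : ℝ) (ha : 0 < a) (r : ℕ) : ContinuousAt (auxF a r) 0 := by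
  have h0 : (0 : ℝ) < 0 + a := by linarith
  obtain ⟨D, hD, -⟩ := auxT_deriv a 0 ha h0 r
  have h1 := (hasDerivAt_pow_inv' a 0 h0 r).const_sub (1 / a ^ (r + 1))
  have h2 := continuousAt_dslope_same.2 h1.differentiableAt
  have h3 := h2.mul (continuous_mul_log.continuousAt (x := 0))
  have h4 : ContinuousAt
      (fun t => (1 / a ^ (r + 1) - 1 / (t + a) ^ (r + 1)) * log t) 0 := by
    refine h3.congr (Filter.Eventually.of_forall fun t => ?_)
    have := sub_smul_dslope (fun t => 1 / a ^ (r + 1) - 1 / (t + a) ^ (r + 1)) 0 t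
    simp only [smul_eq_mul, sub_zero, zero_add, sub_self] at this
    simp only [Pi.mul_apply]
    rw [← this]
    ring
  have h5 : ContinuousAt (fun t => log (t + a)) 0 :=
    (continuousAt_id.add continuousAt_const).log h0.ne'
  exact ((h4.sub (h5.div_const _)).add hD.continuousAt).div_const _

lemma inner_integrable (a : ℝ) (ha : 0 < a) (r : ℕ) :
    IntegrableOn (fun t => log t / (t + a) ^ (r + 2)) (Ioi 0) := by
  rw [← Ioc_union_Ioi_eq_Ioi (zero_le_one : (0 : ℝ) ≤ 1)]
  refine IntegrableOn.union ?_ ?_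
  · have h : IntervalIntegrable (fun t => log t * (1 / (t + a) ^ (r + 2))) volume 0 1 := by
      refine intervalIntegral.intervalIntegrable_log'.mul_continuousOn ?_
      intro t ht
      rw [uIcc_of_le zero_le_one] at ht
      have : 0 < t + a := by linarith [ht.1]
      exact (hasDerivAt_pow_inv' a t this (r + 1)).continuousAt.continuousWithinAt
    rw [intervalIntegrable_iff_integrableOn_Ioc_of_le zero_le_one] at h
    simpa [div_eq_mul_inv] using h
  · refine integrableOn_Ioi_deriv_of_nonneg' (g := auxF a r) (l := 0) ?_ ?_ (auxF_tendsto a ha r)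
    · intro t ht
      exact auxF_deriv a t ha (lt_of_lt_of_le one_pos ht) r
    · intro t ht
      have h1 : (1 : ℝ) < t := ht
      have := log_nonneg h1.le
      positivity

lemma inner_integral (a : ℝ) (ha : 0 < a) (r : ℕ) :
    ∫ t in Ioi (0 : ℝ), log t / (t + a) ^ (r + 2) = (log a - H r) / ((r + 1) * a ^ (r + 1)) := by
  rw [integral_Ioi_of_hasDerivAt_of_tendsto (auxF_cont a ha r).continuousWithinAt
    (fun t ht => auxF_deriv a t ha ht r) (inner_integrable a ha r) (auxF_tendsto a ha r)]
  simp only [auxF, auxT_zero a ha, zero_add, log_zero, mul_zero]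
  have hr : (r : ℝ) + 1 ≠ 0 := by positivity
  field_simp
  ring

lemma inv_deriv (c : ℝ) (p : ℕ) (t : ℝ) (ht : 0 < t) :
    HasDerivAt (fun t => -(log t + c + 1 / ((p : ℝ) + 1)) * (1 / (t + 0) ^ (p + 1)) / (p + 1))
      ((log t + c) / t ^ (p + 2)) t := by
  have h1 := hasDerivAt_pow_inv' 0 t (by linarith) p
  have h2 := (((((hasDerivAt_log ht.ne').add_const c).add_const
    (1 / ((p : ℝ) + 1))).neg).mul h1).div_const ((p : ℝ) + 1)
  have hr : (p : ℝ) + 1 ≠ 0 := by positivity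
  refine h2.congr_deriv ?_
  simp only [add_zero, Pi.neg_apply]
  field_simp
  ring

lemma inv_tendsto (c : ℝ) (p : ℕ) :
    Tendsto (fun t => -(log t + c + 1 / ((p : ℝ) + 1)) * (1 / (t + 0) ^ (p + 1)) / (p + 1))
      atTop (𝓝 0) := by
  have h := (((log_div_pow_tendsto 0 le_rfl p).add
    ((tendsto_pow_inv' 0 p).const_mul (c + 1 / ((p : ℝ) + 1)))).neg).div_const ((p : ℝ) + 1)
  simp only [mul_zero, add_zero, neg_zero, zero_div] at h
  refine h.congr fun t => ?_
  simp only [add_zero]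
  ring

lemma outer_integrable (d : ℝ) (hd : 0 < d) (c : ℝ) (p : ℕ) :
    IntegrableOn (fun t => (log t + c) / t ^ (p + 2)) (Ioi d) := by
  have key : ∀ c, -log d ≤ c → IntegrableOn (fun t => (log t + c) / t ^ (p + 2)) (Ioi d) := by
    intro c hc
    refine integrableOn_Ioi_deriv_of_nonneg' (fun t ht => inv_deriv c p t (hd.trans_le ht)) ?_
      (inv_tendsto c p)
    intro t ht
    have ht' : d < t := ht
    have h1 := log_le_log hd ht'.le
    have h2 : 0 ≤ log t + c := by linarith
    have h3 : 0 < t := hd.trans ht'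
    positivity
  have h1 := key (-log d) le_rfl
  have h2 := key (-log d + 1) (by linarith)
  have h3 := h1.add ((h2.sub h1).const_mul (c + log d))
  refine h3.congr_fun (fun t ht => ?_) measurableSet_Ioi
  simp only [Pi.add_apply, Pi.sub_apply]
  ring

lemma outer_integral (d : ℝ) (hd : 0 < d) (c : ℝ) (p : ℕ) :
    ∫ t in Ioi d, (log t + c) / t ^ (p + 2) =
      (log d + c + 1 / ((p : ℝ) + 1)) / ((p + 1) * d ^ (p + 1)) := by
  rw [integral_Ioi_of_hasDerivAt_of_tendsto' (fun t ht => inv_deriv c p t (hd.trans_le ht))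
    (outer_integrable d hd c p) (inv_tendsto c p)]
  simp only [add_zero]
  have hr : (p : ℝ) + 1 ≠ 0 := by positivity
  field_simp
  ring

lemma shift_Ioi (f : ℝ → ℝ) (d : ℝ) :
    ∫ y in Ioi d, f (y - d) = ∫ t in Ioi (0 : ℝ), f t := by
  rw [← integral_indicator measurableSet_Ioi, ← integral_indicator measurableSet_Ioi,
    ← integral_sub_right_eq_self ((Ioi (0 : ℝ)).indicator f) d]
  congr 1
  ext y
  simp [indicator]

lemma reflect_Iio (f : ℝ → ℝ) (d : ℝ) :
    ∫ x in Iio (0 : ℝ), f (d - x) = ∫ t in Ioi d, f t := by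
  rw [← integral_indicator measurableSet_Iio, ← integral_indicator measurableSet_Ioi,
    ← integral_sub_left_eq_self _ volume d]
  congr 1
  ext y
  simp [indicator]

/-- For every integer `n ≥ 3` and real `d > 0`,
`∫_{x=-∞}^{0} ∫_{y=d}^{∞} log(y−d) / (y−x)^n dy dx
  = (log d − H(n−3)) / ((n−1)(n−2)·d^{n−2})`. -/
theorem iterated_integral_log_y_sub_d (n : ℕ) (hn : 3 ≤ n) (d : ℝ) (hd : 0 < d) :
    (∫ x in Set.Iio (0 : ℝ), ∫ y in Set.Ioi d, Real.log (y - d) / (y - x) ^ n) =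
      (Real.log d - H (n - 3)) / (((n : ℝ) - 1) * ((n : ℝ) - 2) * d ^ (n - 2)) := by
  obtain ⟨p, rfl⟩ : ∃ p, n = p + 3 := ⟨n - 3, by omega⟩
  have h1 : ∀ x ∈ Iio (0 : ℝ), ∫ y in Set.Ioi d, Real.log (y - d) / (y - x) ^ (p + 3) =
      (fun a : ℝ => (1 / ((p : ℝ) + 2)) * ((log a + -H (p + 1)) / a ^ (p + 2))) (d - x) := by
    intro x hx
    have hx' : x < 0 := hx
    have h2 := shift_Ioi (fun t => log t / (t + (d - x)) ^ (p + 1 + 2)) d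
    rw [inner_integral (d - x) (by linarith) (p + 1)] at h2
    have h3 : ∀ y : ℝ, y - d + (d - x) = y - x := fun y => by ring
    simp only [h3] at h2
    refine h2.trans ?_
    have hdx : 0 < d - x := by linarith
    have hr : (p : ℝ) + 2 ≠ 0 := by positivity
    have hr' : (p : ℝ) + 1 + 1 ≠ 0 := by positivity
    push_cast
    field_simp
    ring
  rw [setIntegral_congr_fun measurableSet_Iio h1,
    reflect_Iio (fun a : ℝ => (1 / ((p : ℝ) + 2)) * ((log a + -H (p + 1)) / a ^ (p + 2))) d,
    integral_const_mul, outer_integral d hd, H_succ']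
  have e1 : p + 3 - 3 = p := by omega
  have e2 : p + 3 - 2 = p + 1 := by omega
  rw [e1, e2]
  push_cast
  have e3 : (p : ℝ) + 3 - 1 = p + 2 := by ring
  have e4 : (p : ℝ) + 3 - 2 = p + 1 := by ring
  rw [e3, e4]
  have hr : (p : ℝ) + 2 ≠ 0 := by positivity
  have hr' : (p : ℝ) + 1 ≠ 0 := by positivity
  field_simp
  ring
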